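/- Let X be a dcpo whose Scott topology is sober (T0 and quasi-sober). The map K ↦ (U ↦ (K ⊆ U)) is an order isomorphism from the poset of compact saturated subsets of X (including ∅), ordered by reverse inclusion, onto the poset (ordered pointwise) of all maps φ : O(X) → Prop satisfying φ(X) = True, φ(U ∩ V) = φ(U) ∧ φ(V) for all Scott-open U, V, and φ(⋃ᵢ Uᵢ) = (∃ i, φ(Uᵢ)) for every nonempty directed family (Uᵢ) of Scott-open sets. -/

import Mathlib

open Set TopologicalSpace

/-- A dcpo: every nonempty directed subset has a least upper bound. -/
def IsDcpo (α : Type*) [Preorder α] : Prop :=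
  ∀ d : Set α, d.Nonempty → DirectedOn (· ≤ ·) d → ∃ a, IsLUB d a

/-- A subset of a topological space is saturated if it equals the intersection of the open
sets containing it. -/
def IsSaturatedSet {Z : Type*} [TopologicalSpace Z] (K : Set Z) : Prop :=
  K = ⋂₀ {U : Set Z | IsOpen U ∧ K ⊆ U}

/-- The elements of the Smyth powerdomain in functional form: maps `φ : O(X) → Prop` with
`φ(X) = True`, `φ(U ∩ V) = φ(U) ∧ φ(V)` and `φ(⋃ᵢ Uᵢ) = ∃ i, φ(Uᵢ)` for nonempty directed
families of opens. -/
def IsSmythFunctional {X : Type*} [TopologicalSpace X] (φ : Opens X → Prop) : Prop :=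
  φ ⊤ ∧
  (∀ U V : Opens X, φ (U ⊓ V) ↔ φ U ∧ φ V) ∧
  (∀ S : Set (Opens X), S.Nonempty → DirectedOn (· ≤ ·) S → (φ (sSup S) ↔ ∃ U ∈ S, φ U))

theorem smyth_mono {X : Type*} [TopologicalSpace X] {φ : Opens X → Prop}
    (h : IsSmythFunctional φ) {U V : Opens X} (hUV : U ≤ V) (hU : φ U) : φ V := by
  have h1 := h.2.1 U V
  rw [inf_eq_left.mpr hUV] at h1
  exact (h1.mp hU).2

theorem smyth_of_subset {X : Type*} [TopologicalSpace X] [QuasiSober X] {φ : Opens X → Prop}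
    (h : IsSmythFunctional φ) (U : Opens X)
    (hU : ∀ x, (∀ V : Opens X, φ V → x ∈ V) → x ∈ U) : φ U := by
  by_contra hn
  obtain ⟨W, hUW, hW⟩ := zorn_le_nonempty₀ {V : Opens X | ¬ φ V} (by
    intro c hc hch y hy
    refine ⟨sSup c, ?_, fun z hz => le_sSup hz⟩
    intro hs
    obtain ⟨V, hV, hφ⟩ := (h.2.2 c ⟨y, hy⟩ hch.directedOn).mp hs
    exact hc hV hφ) U hn
  have hWn : ¬ φ W := hW.prop
  have key : ∀ A : Opens X, ((W : Set X)ᶜ ∩ A).Nonempty → φ (W ⊔ A) := by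
    rintro A ⟨x, hx, hxA⟩
    by_contra hA
    have h2 : W ⊔ A ≤ W := hW.le_of_ge hA le_sup_left
    exact hx (h2 (Or.inr hxA))
  have hirr : IsIrreducible ((W : Set X)ᶜ) := by
    constructor
    · by_contra he
      rw [Set.not_nonempty_iff_eq_empty, Set.compl_empty_iff] at he
      have : W = ⊤ := Opens.ext he
      exact hWn (this ▸ h.1)
    · intro A B hA hB hAW hBW
      have a := key ⟨A, hA⟩ hAW
      have b := key ⟨B, hB⟩ hBW
      have ab := (h.2.1 _ _).mpr ⟨a, b⟩
      rw [← sup_inf_left] at ab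
      by_contra he
      apply hWn
      refine smyth_mono h ?_ ab
      refine sup_le le_rfl ?_
      intro x hx
      by_contra hxW
      exact he ⟨x, hxW, hx⟩
  obtain ⟨x, hx⟩ := QuasiSober.sober hirr W.isOpen.isClosed_compl
  have hxW : x ∉ (W : Set X) := hx.mem
  apply hxW
  apply hUW
  apply hU
  intro V hV
  by_contra hxV
  apply hWn
  refine smyth_mono h ?_ hV
  intro y hy
  by_contra hyW
  exact hxV ((hx.specializes (show y ∈ (W : Set X)ᶜ from hyW)).mem_open V.isOpen hy)

theorem smyth_of_compact {X : Type*} [TopologicalSpace X] {K : Set X} (hK : IsCompact K) :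
    IsSmythFunctional (fun U : Opens X => K ⊆ (U : Set X)) := by
  refine ⟨fun _ _ => trivial, fun U V => ?_, fun S hS hd => ⟨fun h => ?_, ?_⟩⟩
  · simp
  · haveI : Nonempty S := hS.to_subtype
    obtain ⟨i, hi⟩ := hK.elim_directed_cover (fun V : S => ((V : Opens X) : Set X))
      (fun V => V.1.isOpen) (by
        intro x hx
        obtain ⟨V, hV, hxV⟩ := Opens.mem_sSup.mp (h hx)
        exact mem_iUnion.mpr ⟨⟨V, hV⟩, hxV⟩) (by
        rintro ⟨A, hA⟩ ⟨B, hB⟩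
        obtain ⟨C, hC, h1, h2⟩ := hd A hA B hB
        exact ⟨⟨C, hC⟩, h1, h2⟩)
    exact ⟨i.1, i.2, hi⟩
  · rintro ⟨U, hU, hKU⟩
    exact hKU.trans (show U ≤ sSup S from le_sSup hU)

theorem smyth_compact {X : Type*} [TopologicalSpace X] [QuasiSober X] {φ : Opens X → Prop}
    (h : IsSmythFunctional φ) : IsCompact {x | ∀ V : Opens X, φ V → x ∈ V} := by
  classical
  refine isCompact_of_finite_subcover ?_
  intro ι U hUo hKU
  let F : Finset ι → Opens X := fun t => ⨆ i ∈ t, ⟨U i, hUo i⟩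
  have hF : Monotone F := fun s t hst => biSup_mono (fun i hi => hst hi)
  have hφ : φ (sSup (range F)) := by
    apply smyth_of_subset h
    intro x hx
    obtain ⟨i, hi⟩ := mem_iUnion.mp (hKU hx)
    refine Opens.mem_sSup.mpr ⟨F {i}, ⟨_, rfl⟩, ?_⟩
    simpa [F] using hi
  obtain ⟨_, ⟨t, rfl⟩, ht⟩ := (h.2.2 (range F) (range_nonempty F)
    (by
      rintro _ ⟨s, rfl⟩ _ ⟨t, rfl⟩
      exact ⟨F (s ∪ t), ⟨_, rfl⟩, hF Finset.subset_union_left,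
        hF Finset.subset_union_right⟩)).mp hφ
  refine ⟨t, fun x hx => ?_⟩
  have := hx _ ht
  simpa [F] using this

/-- For a dcpo `X` whose Scott topology is sober, `K ↦ (U ↦ (K ⊆ U))` is an order
isomorphism from the compact saturated subsets of `X` ordered by reverse inclusion onto the
Smyth functionals `O(X) → Prop` ordered pointwise. -/
theorem compactSaturated_orderIso_smythFunctionals {X : Type*} [PartialOrder X]
    [TopologicalSpace X] [Topology.IsScott X Set.univ]
    (hX : IsDcpo X) [T0Space X] [QuasiSober X] :
    ∃ e : {K : Set X // IsCompact K ∧ IsSaturatedSet K} ≃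
          {φ : Opens X → Prop // IsSmythFunctional φ},
      (∀ (K : {K : Set X // IsCompact K ∧ IsSaturatedSet K}) (U : Opens X),
        (e K).1 U ↔ K.1 ⊆ (U : Set X)) ∧
      (∀ K K' : {K : Set X // IsCompact K ∧ IsSaturatedSet K},
        K'.1 ⊆ K.1 ↔ e K ≤ e K') := by
  refine ⟨⟨fun K => ⟨fun U => K.1 ⊆ (U : Set X), smyth_of_compact K.2.1⟩,
    fun φ => ⟨{x | ∀ V : Opens X, φ.1 V → x ∈ V}, smyth_compact φ.2, ?_⟩, ?_, ?_⟩,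
    fun K U => Iff.rfl, fun K K' => ?_⟩
  · apply Subset.antisymm
    · intro x hx U hU
      exact hU.2 hx
    · intro x hx V hV
      exact hx V ⟨V.isOpen, fun y hy => hy V hV⟩
  · intro K
    apply Subtype.ext
    apply Subset.antisymm
    · intro x hx
      rw [K.2.2]
      rintro U ⟨hU, hKU⟩
      exact hx ⟨U, hU⟩ hKU
    · intro x hx V hV
      exact hV hx
  · intro φ
    apply Subtype.ext
    funext U
    apply propext
    exact ⟨fun h => smyth_of_subset φ.2 U (fun x hx => h hx), fun h x hx => hx U h⟩
  · constructor
    · intro h U hU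
      exact h.trans hU
    · intro h x hx
      rw [K.2.2]
      rintro U ⟨hU, hKU⟩
      exact h ⟨U, hU⟩ hKU hx
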